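/- arXiv:2507.19927 — 3 statements merged into one kernel-verified Lean document; each statement's English description precedes it below -/
import Mathlib

section
/- The Borel subgroup B of SL₂(ℂ) consisting of upper triangular matrices of determinant 1 is cocompact in SL₂(ℂ): there exists a compact subset C ⊆ SL₂(ℂ) such that SL₂(ℂ) = C·B, i.e. every g ∈ SL₂(ℂ) can be written as g = c·b with c ∈ C and b ∈ B. (One may take C = SU(2), the set of unitary matrices of determinant 1, which is compact.) -/
open Matrix Pointwise

/-- The topology on `SL₂(ℂ)` induced from the space of `2 × 2` complex matrices. -/
noncomputable instance : TopologicalSpace (SpecialLinearGroup (Fin 2) ℂ) :=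
  TopologicalSpace.induced (fun g => (g : Matrix (Fin 2) (Fin 2) ℂ)) inferInstance

/-!
Gram–Schmidt applied to the columns of a matrix `A` gives `A = U * T` with `U` unitary and `T` upper
triangular. Moving a unitary diagonal factor from `T` to `U` makes `det U = 1`, so the unitary
matrices of determinant one meet every coset of the Borel subgroup. They form a compact set, being
closed with entries bounded by one.
-/

theorem isCompact_unitaryGroup (n 𝕜 : Type*) [Fintype n] [DecidableEq n] [RCLike 𝕜] :
    IsCompact (unitaryGroup n 𝕜 : Set (Matrix n n 𝕜)) := by
  have hbox : IsCompact (Set.univ.pi fun _ : n ↦ Set.univ.pi fun _ : n ↦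
      Metric.closedBall (0 : 𝕜) 1) :=
    isCompact_univ_pi fun _ ↦ isCompact_univ_pi fun _ ↦ isCompact_closedBall 0 1
  refine hbox.of_isClosed_subset (isClosed_unitary (R := Matrix n n 𝕜)) fun U hU i _ j _ ↦ ?_
  exact mem_closedBall_zero_iff.mpr (entry_norm_bound_of_unitary hU i j)

theorem isCompact_setOf_coe_mem_unitaryGroup (n 𝕜 : Type*) [Fintype n] [DecidableEq n] [RCLike 𝕜] :
    IsCompact {g : SpecialLinearGroup n 𝕜 | (g : Matrix n n 𝕜) ∈ unitaryGroup n 𝕜} :=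
  SpecialLinearGroup.isClosedEmbedding_val.isCompact_preimage (isCompact_unitaryGroup n 𝕜)

theorem exists_diagonal_mem_unitaryGroup_det_eq {n R : Type*} [Fintype n] [DecidableEq n]
    [Nonempty n] [CommRing R] [StarRing R] {z : R} (hz : z ∈ unitary R) :
    ∃ d : n → R, diagonal d ∈ unitaryGroup n R ∧ (diagonal d).det = z := by
  obtain ⟨i⟩ := ‹Nonempty n›
  refine ⟨Pi.mulSingle i z, ?_, ?_⟩
  · rw [mem_unitaryGroup_iff, star_eq_conjTranspose, diagonal_conjTranspose,
      diagonal_mul_diagonal, ← diagonal_one]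
    refine congrArg diagonal (funext fun j ↦ ?_)
    obtain rfl | hj := eq_or_ne j i
    · simpa using Unitary.mul_star_self_of_mem hz
    · simp [hj]
  · rw [det_diagonal, Finset.prod_pi_mulSingle', if_pos (Finset.mem_univ i)]

section QR

variable {n 𝕜 : Type*} [Fintype n] [LinearOrder n] [RCLike 𝕜]

theorem exists_mem_unitaryGroup_eq_mul_isUpperTriangular (A : Matrix n n 𝕜) :
    ∃ U ∈ unitaryGroup n 𝕜, ∃ T : Matrix n n 𝕜, T.IsUpperTriangular ∧ A = U * T := by
  let : LocallyFiniteOrderBot n := .ofIic n (fun a ↦ {b | b ≤ a}) (by simp)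
  let e := EuclideanSpace.basisFun n 𝕜
  let columns (j : n) : EuclideanSpace 𝕜 n := WithLp.toLp 2 (A.col j)
  let q := InnerProductSpace.gramSchmidtOrthonormalBasis finrank_euclideanSpace columns
  have hA : A = e.toBasis.toMatrix columns := rfl
  refine ⟨e.toBasis.toMatrix q, e.toMatrix_orthonormalBasis_mem_unitary q,
    q.toBasis.toMatrix columns,
    InnerProductSpace.gramSchmidtOrthonormalBasis_inv_isUpperTriangular _ _, ?_⟩
  rw [hA, ← q.coe_toBasis, Module.Basis.toMatrix_mul_toMatrix]

theorem exists_mem_specialUnitaryGroup_eq_mul_isUpperTriangular (A : Matrix n n 𝕜) :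
    ∃ U ∈ specialUnitaryGroup n 𝕜, ∃ T : Matrix n n 𝕜, T.IsUpperTriangular ∧ A = U * T := by
  obtain ⟨U, hU, T, hT, rfl⟩ := exists_mem_unitaryGroup_eq_mul_isUpperTriangular A
  cases isEmpty_or_nonempty n
  · exact ⟨U, mem_specialUnitaryGroup_iff.mpr ⟨hU, det_isEmpty⟩, T, hT, rfl⟩
  obtain ⟨d, hd, hdet⟩ := exists_diagonal_mem_unitaryGroup_det_eq (n := n)
    (Unitary.star_mem (det_of_mem_unitary hU))
  refine ⟨U * diagonal d, mem_specialUnitaryGroup_iff.mpr ⟨mul_mem hU hd, ?_⟩,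
    star (diagonal d) * T, ?_, ?_⟩
  · rw [det_mul, hdet, Unitary.mul_star_self_of_mem (det_of_mem_unitary hU)]
  · rw [star_eq_conjTranspose, diagonal_conjTranspose]
    exact (blockTriangular_diagonal _).mul hT
  · rw [Matrix.mul_assoc, ← Matrix.mul_assoc (diagonal d), Unitary.mul_star_self_of_mem hd,
      Matrix.one_mul]

end QR

theorem borel_cocompact_general (n 𝕜 : Type*) [Fintype n] [LinearOrder n] [RCLike 𝕜] :
    ∃ C : Set (SpecialLinearGroup n 𝕜), IsCompact C ∧
      ∀ g : SpecialLinearGroup n 𝕜, ∃ c ∈ C, ∃ b : SpecialLinearGroup n 𝕜,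
        (b : Matrix n n 𝕜).IsUpperTriangular ∧ g = c * b := by
  refine ⟨_, isCompact_setOf_coe_mem_unitaryGroup n 𝕜, fun g ↦ ?_⟩
  obtain ⟨U, hU, T, hT, hg⟩ := exists_mem_specialUnitaryGroup_eq_mul_isUpperTriangular g.val
  obtain ⟨hU, hUdet⟩ := mem_specialUnitaryGroup_iff.mp hU
  have hTdet : T.det = 1 := by simpa [hUdet] using (congrArg det hg).symm
  exact ⟨⟨U, hUdet⟩, hU, ⟨T, hTdet⟩, hT, Subtype.ext hg⟩

/-- The Borel subgroup of upper triangular matrices in `SL₂(ℂ)` is cocompact: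
there is a compact set `C ⊆ SL₂(ℂ)` such that every `g ∈ SL₂(ℂ)` can be written
as `g = c * b` with `c ∈ C` and `b` upper triangular. -/
theorem borel_cocompact :
    ∃ C : Set (SpecialLinearGroup (Fin 2) ℂ), IsCompact C ∧
      ∀ g : SpecialLinearGroup (Fin 2) ℂ, ∃ c ∈ C, ∃ b : SpecialLinearGroup (Fin 2) ℂ,
        (b : Matrix (Fin 2) (Fin 2) ℂ) 1 0 = 0 ∧ g = c * b := by
  obtain ⟨C, hC, hdecomp⟩ := borel_cocompact_general (Fin 2) ℂ
  refine ⟨C, hC, fun g ↦ ?_⟩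
  obtain ⟨c, hc, b, hb, hg⟩ := hdecomp g
  exact ⟨c, hc, b, hb Fin.zero_lt_one, hg⟩
end

section
/- (Failure of the Ahlfors three-point condition at the cusp of the cardioid.) Let c : ℝ → ℂ be the cardioid parametrization c(θ) = (1 − cos θ)·exp(iθ), so c(0) = 0. Then the function θ ↦ ‖c(θ) − c(0)‖ / ‖c(θ) − c(−θ)‖ tends to +∞ (i.e. tends to atTop) as θ → 0 from the right (along the filter 𝓝[>] 0). -/
open Filter Complex Topology

/-- The cardioid parametrization `c(θ) = (1 - cos θ)·exp(iθ)`. -/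
noncomputable def cardioid (θ : ℝ) : ℂ :=
  (1 - Real.cos θ : ℝ) * Complex.exp (θ * Complex.I)

/-- The plane curve with polar equation `r = r(θ)`, as a map into `ℂ`. The radius may be negative,
in which case the point lies on the opposite ray. -/
noncomputable def polarCurve (r : ℝ → ℝ) (θ : ℝ) : ℂ :=
  r θ * exp (θ * I)

theorem cardioid_eq_polarCurve : cardioid = polarCurve fun θ => 1 - Real.cos θ := rfl

theorem exp_mul_I_sub_exp_neg_mul_I (z : ℂ) : exp (z * I) - exp (-z * I) = 2 * sin z * I := by
  rw [exp_mul_I, exp_mul_I, cos_neg, sin_neg]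
  ring

section PolarCurve

variable {r : ℝ → ℝ}

theorem polarCurve_eq_zero {θ : ℝ} (hθ : r θ = 0) : polarCurve r θ = 0 := by
  simp [polarCurve, hθ]

theorem norm_polarCurve (r : ℝ → ℝ) (θ : ℝ) : ‖polarCurve r θ‖ = ‖r θ‖ := by
  rw [polarCurve, norm_mul, norm_exp_ofReal_mul_I, mul_one, norm_real]

theorem polarCurve_sub_polarCurve_neg (hr : r.Even) (θ : ℝ) :
    polarCurve r θ - polarCurve r (-θ) = (r θ * (2 * Real.sin θ) : ℝ) * I := by
  rw [polarCurve, polarCurve, hr θ, ofReal_neg, ← mul_sub, exp_mul_I_sub_exp_neg_mul_I]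
  push_cast
  ring

theorem norm_polarCurve_sub_polarCurve_neg (hr : r.Even) (θ : ℝ) :
    ‖polarCurve r θ - polarCurve r (-θ)‖ = ‖r θ‖ * ‖2 * Real.sin θ‖ := by
  rw [polarCurve_sub_polarCurve_neg hr, norm_mul, norm_I, mul_one, norm_real, norm_mul]

/- The origin and the points at `θ` and `-θ` form an isosceles triangle with apex angle `2θ`, so
the ratio of leg to base depends only on the angle, not on `r`. -/
theorem norm_polarCurve_div_norm_sub_neg (hr : r.Even) {θ : ℝ} (hθ : r θ ≠ 0) :
    ‖polarCurve r θ‖ / ‖polarCurve r θ - polarCurve r (-θ)‖ = ‖(2 * Real.sin θ)⁻¹‖ := by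
  rw [norm_polarCurve, norm_polarCurve_sub_polarCurve_neg hr,
    div_mul_cancel_left₀ (norm_ne_zero_iff.mpr hθ), norm_inv]

end PolarCurve

theorem tendsto_two_mul_sin_nhdsNE_zero :
    Tendsto (fun θ : ℝ => 2 * Real.sin θ) (𝓝[≠] 0) (𝓝[≠] 0) := by
  have hderiv : HasDerivAt (fun θ : ℝ => 2 * Real.sin θ) (2 * Real.cos 0) 0 :=
    (Real.hasDerivAt_sin 0).const_mul 2
  simpa only [Real.sin_zero, mul_zero] using hderiv.tendsto_nhdsNE (by simp)

theorem eventually_one_sub_cos_ne_zero : ∀ᶠ θ : ℝ in 𝓝[≠] 0, 1 - Real.cos θ ≠ 0 := by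
  have hperiod : Set.Ioo (-(2 * Real.pi)) (2 * Real.pi) ∈ 𝓝 (0 : ℝ) :=
    Ioo_mem_nhds (neg_lt_zero.mpr Real.two_pi_pos) Real.two_pi_pos
  filter_upwards [mem_nhdsWithin_of_mem_nhds hperiod, self_mem_nhdsWithin] with θ hθ hne hcos
  exact hne ((Real.cos_eq_one_iff_of_lt_of_lt hθ.1 hθ.2).mp (sub_eq_zero.mp hcos).symm)

theorem cardioid_ahlfors_ratio_atTop_general {r : ℝ → ℝ} (hr : r.Even) (hr_zero : r 0 = 0)
    (hr_ne : ∀ᶠ θ in 𝓝[≠] 0, r θ ≠ 0) :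
    Tendsto (fun θ : ℝ =>
      ‖polarCurve r θ - polarCurve r 0‖ / ‖polarCurve r θ - polarCurve r (-θ)‖)
      (𝓝[≠] 0) atTop := by
  refine (tendsto_norm_inv_nhdsNE_zero_atTop.comp tendsto_two_mul_sin_nhdsNE_zero).congr' ?_
  filter_upwards [hr_ne] with θ hθ
  rw [polarCurve_eq_zero hr_zero, sub_zero, norm_polarCurve_div_norm_sub_neg hr hθ,
    Function.comp_apply]

/-- Failure of the Ahlfors three-point condition at the cusp of the cardioid:
`‖c(θ) - c(0)‖ / ‖c(θ) - c(-θ)‖ → +∞` as `θ → 0⁺`. -/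
theorem cardioid_ahlfors_ratio_atTop :
    Tendsto (fun θ : ℝ => ‖cardioid θ - cardioid 0‖ / ‖cardioid θ - cardioid (-θ)‖)
      (𝓝[>] 0) atTop := by
  rw [cardioid_eq_polarCurve]
  exact (cardioid_ahlfors_ratio_atTop_general (fun θ => by rw [Real.cos_neg]) (by simp)
    eventually_one_sub_cos_ne_zero).mono_left (nhdsGT_le_nhdsNE 0)
end

section
/- Let λ ∈ ℂ with |λ| > 1, let L : ℂ → ℂ be the affine bijection L(z) = λ·(z + 1) + 1 with fixed point p = (λ + 1)/(1 − λ), and let K ⊆ ℂ be a nonempty compact set. If (n_k) is a sequence of integers with |n_k| → ∞ and the images L^{n_k}(K) (iterates of L for positive indices, of L⁻¹ for negative indices) converge in the space NonemptyCompacts ℂ with the Hausdorff metric to some A, then A is the singleton {p}. -/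
open Filter Topology TopologicalSpace

/-- The `n`-th power (for `n : ℤ`) of the loxodromic affine map `L(z) = λ(z+1)+1`:
for `n ≥ 0` it is the `n`-th iterate of `L`, and for `n < 0` it is the `(-n)`-th
iterate of the inverse `L⁻¹(w) = (w - λ - 1)/λ`. -/
noncomputable def loxZPow (lam : ℂ) (n : ℤ) : ℂ → ℂ :=
  if 0 ≤ n then (fun z : ℂ => lam * (z + 1) + 1)^[n.toNat]
  else (fun w : ℂ => (w - lam - 1) / lam)^[(-n).toNat]

/-!
The map `L ^ n` is the homothety with centre `p` and ratio `λ ^ n`, so the Hausdorff distance from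
`L ^ n (K)` to `{p}` is exactly `|λ| ^ n * d`, where `d` is the Hausdorff distance from `K` to
`{p}`. Along the sequence this quantity converges to the distance from `A` to `{p}`. If that limit
were nonzero, taking logarithms would make `n k` converge in `ℝ`, contradicting `|n k| → ∞`.
-/

open AffineMap Metric Set
open scoped NNReal

section ZPow

variable {ι : Type*} {l : Filter ι} [NeBot l] {n : ι → ℤ}

lemma not_tendsto_zpow_mul_nhds_of_tendsto_abs_atTop {r d x : ℝ} (hr₀ : r ≠ 0) (hr₁ : |r| ≠ 1)
    (hx : x ≠ 0) (hn : Tendsto (fun i => |n i|) l atTop) :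
    ¬ Tendsto (fun i => r ^ n i * d) l (𝓝 x) := by
  intro hlim
  have hd : d ≠ 0 := by
    rintro rfl
    simp only [mul_zero, tendsto_const_nhds_iff] at hlim
    exact hx hlim.symm
  have hlog_r : Real.log r ≠ 0 := by
    rw [← Real.log_abs]
    exact Real.log_ne_zero_of_pos_of_ne_one (abs_pos.2 hr₀) hr₁
  have hlog : Tendsto (fun i => n i * Real.log r + Real.log d) l (𝓝 (Real.log x)) := by
    refine (hlim.log hx).congr fun i => ?_
    rw [Real.log_mul (zpow_ne_zero _ hr₀) hd, Real.log_zpow]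
  have hn_lim : Tendsto (fun i => (n i : ℝ)) l (𝓝 ((Real.log x - Real.log d) / Real.log r)) := by
    refine ((hlog.sub_const (Real.log d)).div_const (Real.log r)).congr fun i => ?_
    rw [add_sub_cancel_right, mul_div_cancel_right₀ _ hlog_r]
  have hn_abs : Tendsto (fun i => |(n i : ℝ)|) l atTop := by
    simpa only [Function.comp_def, Int.cast_abs] using
      (tendsto_intCast_atTop_atTop (R := ℝ)).comp hn
  exact not_tendsto_nhds_of_tendsto_atTop hn_abs _ hn_lim.abs

end ZPow

section Similarity

variable {α β : Type*} [PseudoEMetricSpace α] [PseudoEMetricSpace β] {f : α → β} {r : ℝ≥0}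

lemma infEDist_image_of_edist_eq_mul (hr : r ≠ 0) (hf : ∀ x y, edist (f x) (f y) = r * edist x y)
    (x : α) (s : Set α) : infEDist (f x) (f '' s) = r * infEDist x s := by
  simp only [infEDist, iInf_image, hf, ENNReal.mul_iInf_of_ne (ENNReal.coe_ne_zero.2 hr)
    ENNReal.coe_ne_top]

lemma hausdorffEDist_image_of_edist_eq_mul (hr : r ≠ 0)
    (hf : ∀ x y, edist (f x) (f y) = r * edist x y) (s t : Set α) :
    hausdorffEDist (f '' s) (f '' t) = r * hausdorffEDist s t := by
  simp only [hausdorffEDist_def, iSup_image, infEDist_image_of_edist_eq_mul hr hf,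
    mul_max, ENNReal.mul_iSup]

end Similarity

lemma homothety_iterate {k V P : Type*} [CommRing k] [AddCommGroup V] [Module k V] [AddTorsor V P]
    (p : P) (c : k) (m : ℕ) : (homothety p c)^[m] = homothety p (c ^ m) := by
  simp only [← coe_homothetyHom, map_pow, hom_coe_pow _ coe_one coe_mul]

section Homothety

variable {𝕜 V P : Type*} [NormedField 𝕜] [SeminormedAddCommGroup V] [NormedSpace 𝕜 V]

lemma nndist_homothety_homothety [PseudoMetricSpace P] [NormedAddTorsor V P]
    (p : P) (c : 𝕜) (x y : P) :
    nndist (homothety p c x) (homothety p c y) = ‖c‖₊ * nndist x y := by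
  simp only [homothety_apply, nndist_vadd_cancel_right, nndist_smul₀, nndist_vsub_cancel_right]

lemma hausdorffDist_homothety_image [PseudoMetricSpace P] [NormedAddTorsor V P]
    (p : P) {c : 𝕜} (hc : c ≠ 0) (s t : Set P) :
    hausdorffDist (homothety p c '' s) (homothety p c '' t) = ‖c‖ * hausdorffDist s t := by
  have hf (x y : P) : edist (homothety p c x) (homothety p c y) = ‖c‖₊ * edist x y := by
    simp only [edist_nndist, nndist_homothety_homothety, ENNReal.coe_mul]
  rw [hausdorffDist, hausdorffEDist_image_of_edist_eq_mul (nnnorm_ne_zero_iff.2 hc) hf,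
    ENNReal.toReal_mul, ENNReal.coe_toReal, coe_nnnorm, hausdorffDist]

theorem loxodromic_limit_singleton_general [MetricSpace P] [NormedAddTorsor V P]
    {ι : Type*} {l : Filter ι} [NeBot l] {a : 𝕜} (ha₀ : a ≠ 0) (ha₁ : ‖a‖ ≠ 1) (p : P)
    {K : Set P} {n : ι → ℤ} (hn : Tendsto (fun i => |n i|) l atTop)
    {S : ι → NonemptyCompacts P} (hS : ∀ i, (S i : Set P) = homothety p (a ^ n i) '' K)
    {A : NonemptyCompacts P} (hconv : Tendsto S l (𝓝 A)) : A = {p} := by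
  have hdist (i : ι) : dist (S i) {p} = ‖a‖ ^ n i * hausdorffDist K {p} :=
    calc dist (S i) {p}
        = hausdorffDist (homothety p (a ^ n i) '' K) (homothety p (a ^ n i) '' {p}) := by
          rw [NonemptyCompacts.dist_eq, hS, NonemptyCompacts.coe_singleton, image_singleton,
            homothety_apply_same]
      _ = ‖a‖ ^ n i * hausdorffDist K {p} := by
          rw [hausdorffDist_homothety_image p (zpow_ne_zero _ ha₀), norm_zpow]
  have hlim : Tendsto (fun i => ‖a‖ ^ n i * hausdorffDist K {p}) l (𝓝 (dist A {p})) :=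
    (hconv.dist tendsto_const_nhds).congr hdist
  by_contra hA
  exact not_tendsto_zpow_mul_nhds_of_tendsto_abs_atTop (norm_ne_zero_iff.2 ha₀)
    (by rwa [abs_norm]) (dist_ne_zero.2 hA) hn hlim

end Homothety

lemma loxZPow_eq_homothety {lam : ℂ} (h₀ : lam ≠ 0) (h₁ : lam ≠ 1) (n : ℤ) :
    loxZPow lam n = homothety ((lam + 1) / (1 - lam)) (lam ^ n) := by
  have h₁' : 1 - lam ≠ 0 := sub_ne_zero.2 h₁.symm
  have hL : (fun z : ℂ => lam * (z + 1) + 1) = homothety ((lam + 1) / (1 - lam)) lam := by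
    funext z
    simp only [homothety_apply, vsub_eq_sub, smul_eq_mul, vadd_eq_add]
    field_simp
    ring
  have hL_inv : (fun w : ℂ => (w - lam - 1) / lam) = homothety ((lam + 1) / (1 - lam)) lam⁻¹ := by
    funext w
    simp only [homothety_apply, vsub_eq_sub, smul_eq_mul, vadd_eq_add]
    field_simp
    ring
  unfold loxZPow
  split_ifs with hn
  · rw [hL, homothety_iterate, ← zpow_natCast, Int.toNat_of_nonneg hn]
  · rw [hL_inv, homothety_iterate, ← zpow_natCast, Int.toNat_of_nonneg (by lia), inv_zpow',
      neg_neg]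

/-- If `|λ| > 1`, `K ⊆ ℂ` is nonempty compact, `(n k)` is a sequence of integers with
`|n k| → ∞`, and the images `L^{n k}(K)` converge in the Hausdorff metric to `A`, then
`A` is the singleton of the fixed point `p = (λ+1)/(1-λ)`. -/
theorem loxodromic_limit_singleton (lam : ℂ) (hlam : 1 < ‖lam‖)
    (K : Set ℂ) (hK : IsCompact K) (hne : K.Nonempty)
    (n : ℕ → ℤ) (hn : Tendsto (fun k => |n k|) atTop atTop)
    (S : ℕ → NonemptyCompacts ℂ) (hS : ∀ k, (S k : Set ℂ) = loxZPow lam (n k) '' K)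
    (A : NonemptyCompacts ℂ) (hconv : Tendsto S atTop (𝓝 A)) :
    (A : Set ℂ) = {(lam + 1) / (1 - lam)} := by
  have h₀ : lam ≠ 0 := norm_pos_iff.1 (one_pos.trans hlam)
  have h₁ : lam ≠ 1 := ne_of_apply_ne norm (by simpa using hlam.ne')
  simp only [loxZPow_eq_homothety h₀ h₁] at hS
  rw [loxodromic_limit_singleton_general h₀ hlam.ne' _ hn hS hconv,
    NonemptyCompacts.coe_singleton]
end
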